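/- arXiv:1406.1942 — 3 statements merged into one kernel-verified Lean document; each statement's English description precedes it below -/
import Mathlib

section
/- Let G be a finite connected simple graph on [d] and let e and f be distinct edges of G. Then the segment co(e,f) = conv{ρ(e), ρ(f)} is a face (extreme subset) of the edge polytope 𝒫_G — that is, an edge of 𝒫_G — if and only if e and f are not cycle-compatible. -/
/-- For an edge `e = {i,j}` of a graph on `[d]`, `rho e = 𝐞ᵢ + 𝐞ⱼ ∈ ℝ^d`. -/
noncomputable def rho {d : ℕ} (e : Sym2 (Fin d)) : Fin d → ℝ :=
  Sym2.lift ⟨fun i j => Pi.single i 1 + Pi.single j 1, fun _ _ => add_comm _ _⟩ e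

/-- The edge polytope of a graph `G` on `[d]`: the convex hull of `{ρ(e) : e ∈ E(G)}`. -/
noncomputable def edgePolytope {d : ℕ} (G : SimpleGraph (Fin d)) : Set (Fin d → ℝ) :=
  convexHull ℝ (rho '' G.edgeSet)

/-- A set is integral if all its extreme points have integer coordinates. -/
def IsIntegralSet {d : ℕ} (Q : Set (Fin d → ℝ)) : Prop :=
  ∀ x ∈ Q.extremePoints ℝ, ∀ i, ∃ n : ℤ, x i = (n : ℝ)

/-- The hyperplane `{x : ∑ aᵢxᵢ = c}` is a separating hyperplane of `𝒫_G`: it meets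
`𝒫_G \ ∂𝒫_G` (the intrinsic interior), and both closed half-space slices are integral. -/
def IsSepHyperplane {d : ℕ} (G : SimpleGraph (Fin d)) (a : Fin d → ℝ) (c : ℝ) : Prop :=
  a ≠ 0 ∧
  (∃ x ∈ intrinsicInterior ℝ (edgePolytope G), ∑ i, a i * x i = c) ∧
  IsIntegralSet (edgePolytope G ∩ {x | c ≤ ∑ i, a i * x i}) ∧
  IsIntegralSet (edgePolytope G ∩ {x | ∑ i, a i * x i ≤ c})

/-- `𝒫_G` is decomposable if it has a separating hyperplane. -/
def Decomposable {d : ℕ} (G : SimpleGraph (Fin d)) : Prop :=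
  ∃ a c, IsSepHyperplane G a c

/-- Edges `e = {i,j}` and `f = {k,l}` are cycle-compatible: the subgraph of `G` induced by
`{i,j,k,l}` contains a 4-cycle. -/
def CycleCompatible {V : Type*} (G : SimpleGraph V) (e f : Sym2 V) : Prop :=
  ∃ i j k l : V, e = s(i, j) ∧ f = s(k, l) ∧
    ∃ a b c d' : V, ({a, b, c, d'} : Set V) ⊆ {i, j, k, l} ∧
      a ≠ b ∧ a ≠ c ∧ a ≠ d' ∧ b ≠ c ∧ b ≠ d' ∧ c ≠ d' ∧
      G.Adj a b ∧ G.Adj b c ∧ G.Adj c d' ∧ G.Adj d' a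

@[simp]
theorem rho_mk {d : ℕ} (i j : Fin d) : rho s(i, j) = Pi.single i 1 + Pi.single j 1 := rfl

/-- If a linear functional is maximized over `S` exactly on `T`, then `convexHull ℝ T` is an
extreme subset of `convexHull ℝ S`. -/
theorem isExtreme_convexHull_of_linearMap {E : Type*} [AddCommGroup E] [Module ℝ E]
    {S T : Set E} (φ : E →ₗ[ℝ] ℝ) (c : ℝ) (hTS : T ⊆ S) (hT : ∀ x ∈ T, φ x = c)
    (hS : ∀ x ∈ S, x ∈ T ∨ φ x < c) :
    IsExtreme ℝ (convexHull ℝ S) (convexHull ℝ T) := by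
  have hφT : ∀ x ∈ convexHull ℝ T, φ x = c := by
    have h : convexHull ℝ T ⊆ φ ⁻¹' {c} :=
      convexHull_min hT ((convex_singleton c).linear_preimage φ)
    exact fun x hx => h hx
  have hφS : convexHull ℝ S ⊆ convexHull ℝ T ∪ {x | φ x < c} := by
    refine convexHull_min (fun x hx => (hS x hx).imp (subset_convexHull ℝ T ·) id) ?_
    rw [convex_iff_forall_pos]
    rintro x (hx | hx) y (hy | hy) a b ha hb hab
    · exact Or.inl (convex_convexHull ℝ T hx hy ha.le hb.le hab)
    all_goals
      right
      obtain rfl : b = 1 - a := by linarith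
      try have := hφT x hx
      try have := hφT y hy
      simp only [Set.mem_ofPred_eq, map_add, map_smul, smul_eq_mul] at *
      nlinarith
  have hle : ∀ x ∈ convexHull ℝ S, φ x ≤ c := fun x hx =>
    (hφS hx).elim (fun h => (hφT x h).le) fun h : φ x < c => h.le
  refine ⟨convexHull_mono hTS, ?_⟩
  rintro x hx y hy z hz ⟨a, b, ha, hb, hab, rfl⟩
  have hz' := hφT _ hz
  have hxc := hle x hx
  have hyc := hle y hy
  obtain rfl : b = 1 - a := by linarith
  simp only [map_add, map_smul, smul_eq_mul] at hz'
  exact (hφS hx).resolve_right fun h : φ x < c => by nlinarith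

/-- Vertex weights whose edge sums are maximized exactly at `e` and `f` certify that
`conv{ρ(e), ρ(f)}` is a face of the edge polytope. -/
theorem isExtreme_edgePolytope_of_weight {d : ℕ} {G : SimpleGraph (Fin d)} {i j k l : Fin d}
    (hij : G.Adj i j) (hkl : G.Adj k l) (w : Fin d → ℝ) (c : ℝ) (he : w i + w j = c)
    (hf : w k + w l = c)
    (hw : ∀ a b, G.Adj a b → s(a, b) = s(i, j) ∨ s(a, b) = s(k, l) ∨ w a + w b < c) :
    IsExtreme ℝ (edgePolytope G) (convexHull ℝ {rho s(i, j), rho s(k, l)}) := by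
  have hφ : ∀ a b, Fintype.linearCombination ℝ w (rho s(a, b)) = w a + w b := by
    intro a b
    simp [map_add]
  refine isExtreme_convexHull_of_linearMap (Fintype.linearCombination ℝ w) c ?_ ?_ ?_
  · rintro x (rfl | rfl)
    exacts [⟨_, hij, rfl⟩, ⟨_, hkl, rfl⟩]
  · rintro x (rfl | rfl)
    exacts [(hφ i j).trans he, (hφ k l).trans hf]
  · rintro _ ⟨⟨a, b⟩, hab, rfl⟩
    rcases hw a b hab with h | h | h
    · exact Or.inl (Or.inl (congrArg rho h))
    · exact Or.inl (Or.inr (congrArg rho h))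
    · exact Or.inr ((hφ a b).trans_lt h)

/-- Two edges are cycle-compatible iff they are disjoint and joined by two disjoint edges. -/
theorem cycleCompatible_mk_iff {V : Type*} {G : SimpleGraph V} {i j k l : V}
    (hij : G.Adj i j) (hkl : G.Adj k l) :
    CycleCompatible G s(i, j) s(k, l) ↔
      (i ≠ k ∧ i ≠ l ∧ j ≠ k ∧ j ≠ l) ∧ (G.Adj j k ∧ G.Adj i l ∨ G.Adj j l ∧ G.Adj i k) := by
  have hne := hij.ne
  have hne' := hkl.ne
  constructor
  · rintro ⟨i', j', k', l', he, hf, a, b, c, d, hsub, hab, hac, had, hbc, hbd, hcd, h₁, h₂, h₃, h₄⟩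
    have hset : ({i', j', k', l'} : Set V) = {i, j, k, l} := by
      ext x
      grind [Sym2.eq_iff]
    rw [hset] at hsub
    have ha : a = i ∨ a = j ∨ a = k ∨ a = l := hsub (by simp)
    have hb : b = i ∨ b = j ∨ b = k ∨ b = l := hsub (by simp)
    have hc : c = i ∨ c = j ∨ c = k ∨ c = l := hsub (by simp)
    have hd : d = i ∨ d = j ∨ d = k ∨ d = l := hsub (by simp)
    clear hset hsub he hf
    have h₁' := h₁.symm
    have h₂' := h₂.symm
    have h₃' := h₃.symm
    have h₄' := h₄.symm
    grind (splits := 30)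
  · rintro ⟨⟨hik, hil, hjk, hjl⟩, ⟨h, hcross⟩ | ⟨h, hcross⟩⟩
    · exact ⟨i, j, k, l, rfl, rfl, i, j, k, l, subset_rfl, hne, hik, hil, hjk, hjl, hne',
        hij, h, hkl, hcross.symm⟩
    · exact ⟨i, j, k, l, rfl, rfl, i, j, l, k, by grind, hne, hil, hik, hjl, hjk, hne'.symm,
        hij, h, hkl.symm, hcross.symm⟩

/-- If `i, j, k, l` is a 4-cycle, then `conv{ρ(ij), ρ(kl)}` is not a face of the edge polytope:
it meets the other diagonal `conv{ρ(jk), ρ(il)}` in its midpoint. -/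
theorem not_isExtreme_of_adj {d : ℕ} {G : SimpleGraph (Fin d)} {i j k l : Fin d}
    (hik : i ≠ k) (hjl : j ≠ l) (hij : i ≠ j) (hkl : k ≠ l) (hjk : G.Adj j k)
    (hil : G.Adj i l) :
    ¬ IsExtreme ℝ (edgePolytope G) (convexHull ℝ {rho s(i, j), rho s(k, l)}) := by
  intro h
  have hmem : rho s(j, k) ∈ convexHull ℝ {rho s(i, j), rho s(k, l)} := by
    have hx : rho s(j, k) ∈ edgePolytope G := subset_convexHull ℝ _ ⟨_, hjk, rfl⟩
    have hy : rho s(i, l) ∈ edgePolytope G := subset_convexHull ℝ _ ⟨_, hil, rfl⟩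
    refine h.2 hx hy
      (show (1 / 2 : ℝ) • rho s(i, j) + (1 / 2 : ℝ) • rho s(k, l) ∈ _ from ?_) ?_
    · rw [convexHull_pair]
      exact ⟨1 / 2, 1 / 2, by norm_num, by norm_num, by norm_num, rfl⟩
    · refine ⟨1 / 2, 1 / 2, by norm_num, by norm_num, by norm_num, ?_⟩
      simp only [rho_mk]
      module
  rw [convexHull_pair] at hmem
  obtain ⟨a, b, ha, hb, hab, heq⟩ := hmem
  have hi := congrFun heq i
  have hl := congrFun heq l
  simp [hij, hik, hil.ne, hil.ne.symm, hjl.symm, hkl.symm] at hi hl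
  linarith

/-- If `s(i, j)` and `s(i, l)` are edges, their segment is a face of the edge polytope. -/
theorem isExtreme_of_common_vertex {d : ℕ} {G : SimpleGraph (Fin d)} {i j l : Fin d}
    (hij : G.Adj i j) (hil : G.Adj i l) :
    IsExtreme ℝ (edgePolytope G) (convexHull ℝ {rho s(i, j), rho s(i, l)}) := by
  have := hij.ne
  have := hil.ne
  refine isExtreme_edgePolytope_of_weight hij hil
    (fun v => if v = i then 2 else if v = j ∨ v = l then 1 else 0) 3 ?_ ?_ ?_
  · grind
  · grind
  · intro a b hab
    have := hab.ne
    grind [Sym2.eq_iff]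

/-- If `s(i, j)` and `s(k, l)` are disjoint edges and `j` is adjacent to neither `k` nor `l`, their
segment is a face of the edge polytope. -/
theorem isExtreme_of_not_adj {d : ℕ} {G : SimpleGraph (Fin d)} {i j k l : Fin d}
    (hij : G.Adj i j) (hkl : G.Adj k l) (hik : i ≠ k) (hil : i ≠ l) (hjk : j ≠ k) (hjl : j ≠ l)
    (h : ¬ G.Adj j k) (h' : ¬ G.Adj j l) :
    IsExtreme ℝ (edgePolytope G) (convexHull ℝ {rho s(i, j), rho s(k, l)}) := by
  have := hij.ne
  have := hkl.ne
  refine isExtreme_edgePolytope_of_weight hij hkl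
    (fun v => if v = j then 1 else if v = i then -1 else if v = k ∨ v = l then 0 else -2) 0
    ?_ ?_ ?_
  · grind
  · grind
  · intro a b hab
    have := hab.ne
    have := hab.symm
    grind [Sym2.eq_iff]

/-- Let `G` be a finite connected simple graph on `[d]` and `e ≠ f` edges of
`G`. Then `co(e,f) = conv{ρ(e), ρ(f)}` is a face (extreme subset) of `𝒫_G`, i.e. an edge of
`𝒫_G`, if and only if `e` and `f` are not cycle-compatible. -/
theorem edge_of_edgePolytope_iff_not_cycleCompatible {d : ℕ} (G : SimpleGraph (Fin d))
    (hG : G.Connected) (e f : Sym2 (Fin d)) (he : e ∈ G.edgeSet) (hf : f ∈ G.edgeSet)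
    (hef : e ≠ f) :
    IsExtreme ℝ (edgePolytope G) (convexHull ℝ {rho e, rho f}) ↔
      ¬ CycleCompatible G e f := by
  induction e with | _ i j
  induction f with | _ k l
  have hij : G.Adj i j := he
  have hkl : G.Adj k l := hf
  rw [cycleCompatible_mk_iff hij hkl]
  constructor
  · rintro h ⟨⟨hik, hil, hjk, hjl⟩, ⟨h₁, h₂⟩ | ⟨h₁, h₂⟩⟩
    · exact not_isExtreme_of_adj hik hjl hij.ne hkl.ne h₁ h₂ h
    · rw [Sym2.eq_swap (a := k)] at h
      exact not_isExtreme_of_adj hil hjk hij.ne hkl.ne.symm h₁ h₂ h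
  · intro h
    by_cases hdisj : i ≠ k ∧ i ≠ l ∧ j ≠ k ∧ j ≠ l
    · obtain ⟨hik, hil, hjk, hjl⟩ := hdisj
      have hcases : (¬ G.Adj j k ∧ ¬ G.Adj j l) ∨ (¬ G.Adj i k ∧ ¬ G.Adj i l) ∨
          (¬ G.Adj k i ∧ ¬ G.Adj k j) ∨ (¬ G.Adj l i ∧ ¬ G.Adj l j) := by
        rw [G.adj_comm k i, G.adj_comm k j, G.adj_comm l i, G.adj_comm l j]
        tauto
      rcases hcases with ⟨h₁, h₂⟩ | ⟨h₁, h₂⟩ | ⟨h₁, h₂⟩ | ⟨h₁, h₂⟩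
      · exact isExtreme_of_not_adj hij hkl hik hil hjk hjl h₁ h₂
      · rw [Sym2.eq_swap (a := i)]
        exact isExtreme_of_not_adj hij.symm hkl hjk hjl hik hil h₁ h₂
      · rw [Set.pair_comm, Sym2.eq_swap (a := k)]
        exact isExtreme_of_not_adj hkl.symm hij hil.symm hjl.symm hik.symm hjk.symm h₁ h₂
      · rw [Set.pair_comm]
        exact isExtreme_of_not_adj hkl hij hik.symm hjk.symm hil.symm hjl.symm h₁ h₂
    · have hcases : i = k ∨ i = l ∨ j = k ∨ j = l := by tauto
      rcases hcases with rfl | rfl | rfl | rfl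
      · exact isExtreme_of_common_vertex hij hkl
      · rw [Sym2.eq_swap (a := k)]
        exact isExtreme_of_common_vertex hij hkl.symm
      · rw [Sym2.eq_swap (a := i)]
        exact isExtreme_of_common_vertex hij.symm hkl
      · rw [Sym2.eq_swap (a := i), Sym2.eq_swap (a := k)]
        exact isExtreme_of_common_vertex hij.symm hkl.symm
end

section
/- Let G be a finite simple graph on [d] with at least one edge. Then the dimension of the affine hull of the edge polytope 𝒫_G equals d − r − 1, where r is the number of connected components of G that are bipartite (isolated vertices counting as bipartite components). -/
/-- A graph is bipartite if its vertex set can be partitioned into two parts so that every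
edge joins the two parts. -/
def IsBipartite {V : Type*} (G : SimpleGraph V) : Prop :=
  ∃ s : Set V, ∀ ⦃i j⦄, G.Adj i j → (i ∈ s ↔ j ∉ s)

open Module in
/-- If a linear functional takes the same nonzero value on all points of a nonempty set, then the
linear span of the set has one more dimension than its affine span. -/
theorem finrank_span_eq_finrank_vectorSpan_add_one {K E : Type*} [Field K] [AddCommGroup E]
    [Module K E] [FiniteDimensional K E] {s : Set E} (hs : s.Nonempty) (φ : E →ₗ[K] K) {c : K}
    (hc : c ≠ 0) (hφ : ∀ x ∈ s, φ x = c) :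
    finrank K (Submodule.span K s) = finrank K (vectorSpan K s) + 1 := by
  obtain ⟨p, hp⟩ := hs
  have hker : ∀ x ∈ vectorSpan K s, φ x = 0 := by
    have hle : vectorSpan K s ≤ LinearMap.ker φ := by
      refine Submodule.span_le.2 ?_
      rintro _ ⟨x, hx, y, hy, rfl⟩
      simp [hφ x hx, hφ y hy]
    exact hle
  have hp0 : p ≠ 0 := by
    rintro rfl
    exact hc (by rw [← hφ 0 hp, map_zero])
  have hsup : Submodule.span K s = vectorSpan K s ⊔ K ∙ p := by
    apply le_antisymm
    · refine Submodule.span_le.2 fun x hx => ?_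
      rw [← sub_add_cancel x p]
      exact Submodule.add_mem_sup (vsub_mem_vectorSpan K hx hp)
        (Submodule.mem_span_singleton_self p)
    · refine sup_le (Submodule.span_le.2 ?_) ?_
      · rintro _ ⟨x, hx, y, hy, rfl⟩
        exact Submodule.sub_mem _ (Submodule.subset_span hx) (Submodule.subset_span hy)
      · exact Submodule.span_mono (Set.singleton_subset_iff.2 hp)
  have hinf : vectorSpan K s ⊓ K ∙ p = ⊥ := by
    rw [Submodule.eq_bot_iff]
    rintro x ⟨hx, hxp⟩
    obtain ⟨t, rfl⟩ := Submodule.mem_span_singleton.1 hxp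
    have ht := hker _ hx
    rw [map_smul, hφ p hp, smul_eq_mul] at ht
    rw [(mul_eq_zero.1 ht).resolve_right hc, zero_smul]
  have hdim := Submodule.finrank_sup_add_finrank_inf_eq (vectorSpan K s) (K ∙ p)
  rwa [hinf, finrank_bot, add_zero, finrank_span_singleton hp0, ← hsup] at hdim

namespace SimpleGraph

variable {V : Type*} (G : SimpleGraph V)

/-- The real vertex weightings in which the two ends of every edge have opposite weights. -/
def alternatingWeights : Submodule ℝ (V → ℝ) where
  carrier := {y | ∀ ⦃i j⦄, G.Adj i j → y i + y j = 0}
  add_mem' {x y} hx hy i j hij := by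
    have h₁ := hx hij
    have h₂ := hy hij
    simp only [Pi.add_apply]
    linarith
  zero_mem' := by simp
  smul_mem' a x hx i j hij := by
    simp only [Pi.smul_apply, smul_eq_mul]
    rw [← mul_add, hx hij, mul_zero]

variable {G}

theorem mem_alternatingWeights {y : V → ℝ} :
    y ∈ G.alternatingWeights ↔ ∀ ⦃i j⦄, G.Adj i j → y i + y j = 0 := Iff.rfl

/-- A function that agrees on adjacent vertices agrees on reachable vertices. -/
theorem Reachable.apply_eq_of_forall_adj {α : Type*} {f : V → α}
    (hf : ∀ ⦃i j⦄, G.Adj i j → f i = f j) {u v : V} (h : G.Reachable u v) : f u = f v := by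
  obtain ⟨w⟩ := h
  induction w with
  | nil => rfl
  | cons hadj _ ih => exact (hf hadj).trans ih

/-- An alternating weighting vanishes on the components that are not bipartite. -/
theorem apply_eq_zero_of_not_isBipartite {y : V → ℝ} (hy : y ∈ G.alternatingWeights) {v : V}
    (hv : ¬ _root_.IsBipartite (G.induce (G.connectedComponentMk v).supp)) : y v = 0 := by
  by_contra hne
  refine hv ⟨{w | 0 < y w}, fun i j hij => ?_⟩
  have hadj : G.Adj i j := hij
  have hi : |y i| = |y v| := Reachable.apply_eq_of_forall_adj (f := fun w => |y w|)
    (fun a b hab => by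
      rw [eq_neg_of_add_eq_zero_left (hy hab), abs_neg]) (ConnectedComponent.exact i.2)
  have hi0 : y i ≠ 0 := abs_ne_zero.1 (hi ▸ abs_ne_zero.2 hne)
  have hsum := hy hadj
  simp only [Set.mem_ofPred_eq, not_lt]
  constructor
  · intro; linarith
  · intro hj
    exact lt_of_le_of_ne (by linarith) hi0.symm

/-- There is an alternating weighting with weights `±1` on all bipartite components. -/
theorem exists_signs_mem_alternatingWeights (G : SimpleGraph V) :
    ∃ σ ∈ G.alternatingWeights, ∀ v, _root_.IsBipartite (G.induce (G.connectedComponentMk v).supp) →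
      σ v * σ v = 1 := by
  classical
  have hex : ∀ c : G.ConnectedComponent, ∃ τ : V → ℝ,
      (∀ i j, G.Adj i j → G.connectedComponentMk i = c → τ i + τ j = 0) ∧
        (_root_.IsBipartite (G.induce c.supp) → ∀ v, G.connectedComponentMk v = c → τ v * τ v = 1) := by
    intro c
    by_cases hc : _root_.IsBipartite (G.induce c.supp)
    · obtain ⟨s, hs⟩ := hc
      refine ⟨fun v => if v ∈ Subtype.val '' s then 1 else -1, fun i j hij hi => ?_,
        fun _ v _ => by dsimp only; split_ifs <;> norm_num⟩
      have hj : G.connectedComponentMk j = c :=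
        (ConnectedComponent.connectedComponentMk_eq_of_adj hij).symm.trans hi
      have hiff := @hs ⟨i, hi⟩ ⟨j, hj⟩ hij
      have hmi : i ∈ Subtype.val '' s ↔ (⟨i, hi⟩ : c.supp) ∈ s := by simp [hi]
      have hmj : j ∈ Subtype.val '' s ↔ (⟨j, hj⟩ : c.supp) ∈ s := by simp [hj]
      by_cases h : (⟨j, hj⟩ : c.supp) ∈ s <;> simp only [hmi, hmj, hiff, h] <;> norm_num
    · exact ⟨0, by simp, fun h => absurd h hc⟩
  choose τ hτ hτ' using hex
  refine ⟨fun v => τ (G.connectedComponentMk v) v, fun i j hij => ?_, fun v hv => hτ' _ hv v rfl⟩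
  dsimp only
  rw [← ConnectedComponent.connectedComponentMk_eq_of_adj hij]
  exact hτ _ i j hij rfl

/-- The space of alternating weightings has dimension the number of bipartite components. -/
theorem finrank_alternatingWeights [Finite V] (G : SimpleGraph V) :
    Module.finrank ℝ G.alternatingWeights =
      Nat.card {c : G.ConnectedComponent // _root_.IsBipartite (G.induce c.supp)} := by
  classical
  set B := {c : G.ConnectedComponent // _root_.IsBipartite (G.induce c.supp)}
  have : Fintype B := Fintype.ofFinite B
  obtain ⟨σ, hσ, hσ1⟩ := exists_signs_mem_alternatingWeights G
  let ext (a : B → ℝ) (c : G.ConnectedComponent) : ℝ :=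
    if h : _root_.IsBipartite (G.induce c.supp) then a ⟨c, h⟩ else 0
  have ext_coe (a : B → ℝ) (c : B) : ext a c = a c := dif_pos c.2
  let f : (B → ℝ) →ₗ[ℝ] G.alternatingWeights :=
    { toFun a := ⟨fun v => ext a (G.connectedComponentMk v) * σ v, fun i j hij => by
        dsimp only
        rw [ConnectedComponent.connectedComponentMk_eq_of_adj hij, ← mul_add, hσ hij, mul_zero]⟩
      map_add' a b := by
        ext v
        simp only [ext, Submodule.coe_add, Pi.add_apply]
        split_ifs <;> ring
      map_smul' t a := by
        ext v
        simp only [ext, Submodule.coe_smul, Pi.smul_apply, smul_eq_mul, RingHom.id_apply]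
        split_ifs <;> ring }
  have hf (a : B → ℝ) (v : V) :
      (f a : V → ℝ) v = ext a (G.connectedComponentMk v) * σ v := rfl
  have hinj : Function.Injective f := by
    intro a b hab
    ext ⟨c, hc⟩
    induction c using ConnectedComponent.ind with | _ v
    have hv := congrArg (fun y : G.alternatingWeights => (y : V → ℝ) v) hab
    simp only [hf] at hv
    have hσv : σ v ≠ 0 := fun h0 => by simpa [h0] using hσ1 v hc
    rw [← ext_coe a, ← ext_coe b]
    exact mul_right_cancel₀ hσv hv
  have hsurj : Function.Surjective f := by
    rintro ⟨y, hy⟩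
    refine ⟨fun c => y c.1.out * σ c.1.out, ?_⟩
    ext v
    rw [hf]
    by_cases hv : _root_.IsBipartite (G.induce (G.connectedComponentMk v).supp)
    · have hreach : G.Reachable (G.connectedComponentMk v).out v :=
        ConnectedComponent.exact (Quot.out_eq _)
      have heq := hreach.apply_eq_of_forall_adj (f := fun w => y w * σ w) fun a b hab => by
        rw [eq_neg_of_add_eq_zero_left (hy hab), eq_neg_of_add_eq_zero_left (hσ hab), neg_mul_neg]
      simp only [ext, dif_pos hv]
      rw [heq, mul_assoc, hσ1 v hv, mul_one]
    · simp only [ext, dif_neg hv, zero_mul]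
      exact (apply_eq_zero_of_not_isBipartite hy hv).symm
  rw [← (LinearEquiv.ofBijective f ⟨hinj, hsurj⟩).finrank_eq, Module.finrank_fintype_fun_eq_card,
    Nat.card_eq_fintype_card]

end SimpleGraph

open Matrix in
theorem dotProduct_rho {d : ℕ} (y : Fin d → ℝ) (i j : Fin d) :
    y ⬝ᵥ rho s(i, j) = y i + y j := by
  simp [rho, dotProduct_add]

/-- Under the dot product, the functionals vanishing on all `ρ(e)` are the alternating weightings. -/
theorem dualAnnihilator_span_rho {d : ℕ} (G : SimpleGraph (Fin d)) :
    (Submodule.span ℝ (rho '' G.edgeSet)).dualAnnihilator =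
      G.alternatingWeights.map (dotProductEquiv ℝ (Fin d)).toLinearMap := by
  ext φ
  obtain ⟨y, rfl⟩ := (dotProductEquiv ℝ (Fin d)).surjective φ
  have hmap : dotProductEquiv ℝ (Fin d) y ∈
      G.alternatingWeights.map (dotProductEquiv ℝ (Fin d)).toLinearMap ↔
        y ∈ G.alternatingWeights :=
    (dotProductEquiv ℝ (Fin d)).injective.mem_set_image
  rw [hmap, Submodule.mem_dualAnnihilator, SimpleGraph.mem_alternatingWeights]
  constructor
  · intro hy i j hij
    rw [← dotProduct_rho]
    exact hy _ (Submodule.subset_span ⟨s(i, j), hij, rfl⟩)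
  · intro hy
    have hle : Submodule.span ℝ (rho '' G.edgeSet) ≤
        LinearMap.ker (dotProductEquiv ℝ (Fin d) y) := by
      refine Submodule.span_le.2 ?_
      rintro _ ⟨e, he, rfl⟩
      induction e with | _ i j
      exact (dotProduct_rho y i j).trans (hy he)
    exact hle

/-- For a finite simple graph `G` on `[d]` with at least one edge, the
dimension of the affine hull of `𝒫_G` is `d - r - 1`, where `r` is the number of bipartite
connected components of `G`. -/
theorem dim_edgePolytope {d : ℕ} (G : SimpleGraph (Fin d)) (h : G.edgeSet.Nonempty) :
    Module.finrank ℝ (affineSpan ℝ (edgePolytope G)).direction =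
      d - Nat.card {c : G.ConnectedComponent // IsBipartite (G.induce c.supp)} - 1 := by
  have hspan := finrank_span_eq_finrank_vectorSpan_add_one (h.image rho)
    (dotProductEquiv ℝ (Fin d) 1) two_ne_zero (by
      rintro _ ⟨e, -, rfl⟩
      induction e with | _ i j
      exact (dotProduct_rho 1 i j).trans one_add_one_eq_two)
  have hdual := Subspace.finrank_add_finrank_dualAnnihilator_eq
    (Submodule.span ℝ (rho '' G.edgeSet))
  rw [dualAnnihilator_span_rho, LinearEquiv.finrank_map_eq,
    SimpleGraph.finrank_alternatingWeights, Module.finrank_fin_fun] at hdual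
  rw [edgePolytope, affineSpan_convexHull, direction_affineSpan]
  omega
end

section
/- Let G be a finite connected simple graph on [d]. The edge polytope 𝒫_G is type II decomposable if and only if there exists a partition [d] = V₁ ⊔ V₂ ⊔ V₃ ⊔ V₄ ⊔ V₅ of the vertex set satisfying the following conditions, where E_{i,j} denotes the set of edges of G with one endpoint in V_i and the other in V_j: (1) the induced subgraph G[V₁ ∪ V₂] is bipartite with bipartition V₁, V₂ (every edge of G[V₁ ∪ V₂] joins V₁ to V₂); (2) |E_{1,4}| ≥ 1, |E_{2,3}| ≥ 1, and every pair of edges e ∈ E_{1,4} and f ∈ E_{2,3} is cycle-compatible; (3) E_{1,3} = E_{1,5} = E_{2,4} = E_{2,5} = ∅. -/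
/-- Type II decomposability: a separating hyperplane through `0` with all `aᵢ ∈ {0,1,-1}`,
some `aᵢ = 0`, and no edge with signature `{1,1}` or `{-1,-1}`. -/
def TypeIIDecomposable {d : ℕ} (G : SimpleGraph (Fin d)) : Prop :=
  ∃ a : Fin d → ℝ, (∀ i, a i = 0 ∨ a i = 1 ∨ a i = -1) ∧ (∃ i, a i = 0) ∧
    (∀ i j, G.Adj i j → ¬(a i = 1 ∧ a j = 1) ∧ ¬(a i = -1 ∧ a j = -1)) ∧
    IsSepHyperplane G a 0

section Convexity

open scoped Pointwise

variable {E : Type*} [NormedAddCommGroup E] [NormedSpace ℝ E]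

theorem mem_intrinsicInterior_iff_exists_isOpen {s : Set E} {x : E} :
    x ∈ intrinsicInterior ℝ s ↔
      x ∈ affineSpan ℝ s ∧ ∃ U, IsOpen U ∧ x ∈ U ∧ U ∩ affineSpan ℝ s ⊆ s := by
  rw [mem_intrinsicInterior]
  constructor
  · rintro ⟨y, hy, rfl⟩
    obtain ⟨t, ht, hto, hyt⟩ := mem_interior.1 hy
    obtain ⟨U, hU, rfl⟩ := isOpen_induced_iff.1 hto
    exact ⟨y.2, U, hU, hyt, fun z hz => @ht ⟨z, hz.2⟩ hz.1⟩
  · rintro ⟨hx, U, hU, hxU, hUs⟩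
    refine ⟨⟨x, hx⟩, mem_interior.2 ⟨Subtype.val ⁻¹' U, ?_,
      hU.preimage continuous_subtype_val, hxU⟩, rfl⟩
    exact fun z hz => hUs ⟨hz, z.2⟩

/-- A segment ending at a relative interior point of `s` can be prolonged inside `s`. -/
theorem exists_lineMap_mem_of_mem_intrinsicInterior {s : Set E} {x y : E}
    (hx : x ∈ intrinsicInterior ℝ s) (hy : y ∈ s) :
    ∃ t : ℝ, 1 < t ∧ AffineMap.lineMap y x t ∈ s := by
  obtain ⟨hxs, U, hU, hxU, hUs⟩ := mem_intrinsicInterior_iff_exists_isOpen.1 hx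
  have hcont : Continuous fun t : ℝ => AffineMap.lineMap y x t :=
    AffineMap.lineMap_continuous
  have hmem : ∀ᶠ t in nhds (1 : ℝ), AffineMap.lineMap y x t ∈ U :=
    hcont.continuousAt.eventually_mem (by simpa using hU.mem_nhds hxU)
  obtain ⟨t, ht, htU⟩ :=
    ((eventually_mem_nhdsWithin (a := (1 : ℝ)) (s := Set.Ioi 1)).and
      (hmem.filter_mono nhdsWithin_le_nhds)).exists
  exact ⟨t, ht, hUs ⟨htU, AffineMap.lineMap_mem t (subset_affineSpan ℝ s hy) hxs⟩⟩

/-- Moving a relative interior point of a convex set `s` towards a point of `s`, without reaching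
it, stays in the relative interior. -/
theorem Convex.lineMap_mem_intrinsicInterior {s : Set E} (hs : Convex ℝ s) {x y : E}
    (hx : x ∈ intrinsicInterior ℝ s) (hy : y ∈ s) {t : ℝ} (ht0 : 0 < t) (ht1 : t ≤ 1) :
    AffineMap.lineMap y x t ∈ intrinsicInterior ℝ s := by
  obtain ⟨hxs, U, hU, hxU, hUs⟩ := mem_intrinsicInterior_iff_exists_isOpen.1 hx
  have hys := subset_affineSpan ℝ s hy
  have hinv (z : E) (a b : ℝ) (hab : a * b = 1) :
      AffineMap.lineMap y (AffineMap.lineMap y z a) b = z := by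
    simp only [AffineMap.lineMap_apply_module', add_sub_cancel_right, smul_smul, mul_comm b a, hab,
      one_smul, sub_add_cancel]
  refine mem_intrinsicInterior_iff_exists_isOpen.2 ⟨AffineMap.lineMap_mem t hys hxs,
    (fun z => AffineMap.lineMap y z t⁻¹) ⁻¹' U, hU.preimage ?_, ?_, ?_⟩
  · simp only [AffineMap.lineMap_apply_module']
    fun_prop
  · rw [Set.mem_preimage, hinv _ _ _ (mul_inv_cancel₀ ht0.ne')]
    exact hxU
  · rintro z ⟨hzU, hzs⟩
    rw [← hinv z t⁻¹ t (inv_mul_cancel₀ ht0.ne')]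
    exact hs.lineMap_mem hy (hUs ⟨hzU, AffineMap.lineMap_mem _ hys hzs⟩) ⟨ht0.le, ht1⟩

theorem Convex.exists_mem_intrinsicInterior_eq_zero [FiniteDimensional ℝ E] {s : Set E}
    (hs : Convex ℝ s) (φ : E →ₗ[ℝ] ℝ) {p n : E} (hp : p ∈ s) (hn : n ∈ s) (hφp : 0 < φ p)
    (hφn : φ n < 0) : ∃ x ∈ intrinsicInterior ℝ s, φ x = 0 := by
  obtain ⟨q, hq⟩ := Set.Nonempty.intrinsicInterior hs ⟨p, hp⟩
  have key (r : E) (hr : r ∈ s) (h : φ q * φ r < 0) : ∃ x ∈ intrinsicInterior ℝ s, φ x = 0 := by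
    have hne : φ r - φ q ≠ 0 := by
      intro h0
      rw [sub_eq_zero.1 h0] at h
      exact h.not_ge (mul_self_nonneg (φ q))
    have hsq : 0 < (φ r - φ q) ^ 2 := by positivity
    have hdiv : φ r / (φ r - φ q) = φ r * (φ r - φ q) / (φ r - φ q) ^ 2 := by
      field_simp
    refine ⟨AffineMap.lineMap r q (φ r / (φ r - φ q)),
      hs.lineMap_mem_intrinsicInterior hq hr ?_ ?_, ?_⟩
    · rw [hdiv]
      apply div_pos _ hsq
      nlinarith [mul_self_nonneg (φ r)]
    · rw [hdiv, div_le_one hsq]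
      nlinarith [mul_self_nonneg (φ q)]
    · simp only [AffineMap.lineMap_apply_module', map_add, map_smul, map_sub, smul_eq_mul]
      field_simp
      ring
  rcases lt_trichotomy (φ q) 0 with h | h | h
  · exact key p hp (mul_neg_of_neg_of_pos h hφp)
  · exact ⟨q, hq, h⟩
  · exact key n hn (mul_neg_of_pos_of_neg h hφn)

/-- If a linear functional takes the values `1`, `-1`, `0` on `P`, `N`, `Z` and every midpoint of a
point of `P` and a point of `N` lies in the convex hull of `Z`, then the part of the convex hull of
`P ∪ N ∪ Z` where the functional is nonnegative is spanned by `P ∪ Z`. -/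
theorem convexHull_inter_nonneg_eq {P N Z : Set E} (hP : P.Nonempty) (hN : N.Nonempty)
    (hZ : Z.Nonempty) (φ : E →ₗ[ℝ] ℝ) (hφP : ∀ x ∈ P, φ x = 1) (hφN : ∀ x ∈ N, φ x = -1)
    (hφZ : ∀ x ∈ Z, φ x = 0)
    (hmid : ∀ p ∈ P, ∀ n ∈ N, (1 / 2 : ℝ) • (p + n) ∈ convexHull ℝ Z) :
    convexHull ℝ (P ∪ N ∪ Z) ∩ {x | 0 ≤ φ x} = convexHull ℝ (P ∪ Z) := by
  have hconst (A : Set E) (c : ℝ) (h : ∀ x ∈ A, φ x = c) : ∀ x ∈ convexHull ℝ A, φ x = c :=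
    convexHull_min h (convex_hyperplane φ.isLinear c)
  have hmid' : ∀ p ∈ convexHull ℝ P, ∀ n ∈ convexHull ℝ N,
      (1 / 2 : ℝ) • (p + n) ∈ convexHull ℝ Z := by
    intro p hp n hn
    have hsub : convexHull ℝ (P + N) ⊆ (fun x => (1 / 2 : ℝ) • x) ⁻¹' convexHull ℝ Z :=
      convexHull_min (by rintro _ ⟨p, hp, n, hn, rfl⟩; exact hmid p hp n hn)
        ((convex_convexHull ℝ Z).is_linear_preimage (IsLinearMap.isLinearMap_smul _))
    exact hsub (by rw [convexHull_add]; exact Set.add_mem_add hp hn)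
  apply Set.Subset.antisymm
  · rintro x ⟨hx, hφx⟩
    rw [convexHull_union (hP.mono Set.subset_union_left) hZ, mem_convexJoin] at hx
    obtain ⟨y, hy, z, hz, α, β, hα, hβ, hαβ, rfl⟩ := hx
    rw [convexHull_union hP hN, mem_convexJoin] at hy
    obtain ⟨p, hp, n, hn, γ, δ, hγ, hδ, hγδ, rfl⟩ := hy
    have hm := hmid' p hp n hn
    simp only [Set.mem_ofPred_eq, map_add, map_smul, smul_eq_mul, hconst P 1 hφP p hp,
      hconst N (-1) hφN n hn, hconst Z 0 hφZ z hz] at hφx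
    have hcomb : α • (γ • p + δ • n) + β • z =
        (α * (γ - δ)) • p + (2 * α * δ) • ((1 / 2 : ℝ) • (p + n)) + β • z := by
      module
    rw [hcomb]
    have hPZ := convexHull_mono (𝕜 := ℝ) (Set.subset_union_left (s := P) (t := Z))
    have hZP := convexHull_mono (𝕜 := ℝ) (Set.subset_union_right (s := P) (t := Z))
    have hC := convex_convexHull ℝ (P ∪ Z)
    have := hC.sum_mem (t := Finset.univ) (w := ![α * (γ - δ), 2 * α * δ, β])
      (z := ![p, (1 / 2 : ℝ) • (p + n), z])
      (by
        intro i _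
        fin_cases i
        · show 0 ≤ α * (γ - δ)
          linarith
        · show 0 ≤ 2 * α * δ
          positivity
        · exact hβ)
      (by
        simp only [Fin.sum_univ_three, Matrix.cons_val]
        linear_combination hαβ + α * hγδ)
      (by
        intro i _
        fin_cases i
        · exact hPZ hp
        · exact hZP hm
        · exact hZP hz)
    simpa only [Fin.sum_univ_three, Matrix.cons_val] using this
  · refine Set.subset_inter (convexHull_mono ?_)
      (convexHull_min ?_ (convex_halfSpace_ge φ.isLinear 0))
    · exact Set.union_subset_union_left _ Set.subset_union_left
    · rintro x (hx | hx)
      · simp [hφP x hx]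
      · simp [hφZ x hx]

end Convexity

section EdgePolytope

variable {d : ℕ} {G : SimpleGraph (Fin d)}

/-- The linear functional `x ↦ ∑ aᵢ xᵢ`. -/
noncomputable def weightFunctional (a : Fin d → ℝ) : (Fin d → ℝ) →ₗ[ℝ] ℝ :=
  ∑ i, a i • LinearMap.proj i

theorem weightFunctional_apply (a x : Fin d → ℝ) : weightFunctional a x = ∑ i, a i * x i := by
  simp [weightFunctional]

theorem weightFunctional_rho (a : Fin d → ℝ) (u v : Fin d) :
    weightFunctional a (rho s(u, v)) = a u + a v := by
  simp [weightFunctional_apply, rho, mul_add, Finset.sum_add_distrib, Pi.single_apply]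

theorem rho_mk_apply (u v w : Fin d) :
    rho s(u, v) w = (if w = u then 1 else 0) + (if w = v then 1 else 0) := by
  simp [rho, Pi.single_apply]

theorem rho_apply_integer (e : Sym2 (Fin d)) (w : Fin d) : ∃ n : ℤ, rho e w = n := by
  induction e with
  | _ u v =>
    refine ⟨(if w = u then 1 else 0) + (if w = v then 1 else 0), ?_⟩
    rw [rho_mk_apply]
    push_cast
    rfl

theorem rho_mem_edgePolytope {u v : Fin d} (h : G.Adj u v) : rho s(u, v) ∈ edgePolytope G :=
  subset_convexHull ℝ _ ⟨s(u, v), h, rfl⟩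

theorem le_of_mem_edgePolytope (φ : (Fin d → ℝ) →ₗ[ℝ] ℝ) {c : ℝ}
    (h : ∀ u v, G.Adj u v → φ (rho s(u, v)) ≤ c) {x : Fin d → ℝ} (hx : x ∈ edgePolytope G) :
    φ x ≤ c := by
  refine convexHull_min (t := {x | φ x ≤ c}) ?_ (convex_halfSpace_le φ.isLinear c) hx
  rintro _ ⟨e, he, rfl⟩
  induction e with
  | _ u v => exact h u v he

/-- A linear inequality valid on the edge polytope and tight at an interior point of a segment is
tight at the end of the segment. -/
theorem eq_of_mem_openSegment_of_tight (φ : (Fin d → ℝ) →ₗ[ℝ] ℝ) {c : ℝ}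
    (h : ∀ u v, G.Adj u v → φ (rho s(u, v)) ≤ c) {x y z : Fin d → ℝ} (hy : y ∈ edgePolytope G)
    (hz : z ∈ edgePolytope G) (hx : x ∈ openSegment ℝ y z) (hφx : φ x = c) : φ y = c := by
  obtain ⟨α, β, hα, hβ, hαβ, rfl⟩ := hx
  have hy' := le_of_mem_edgePolytope φ h hy
  have hz' := le_of_mem_edgePolytope φ h hz
  simp only [map_add, map_smul, smul_eq_mul] at hφx
  obtain rfl : β = 1 - α := by linarith
  nlinarith

theorem add_eq_one_of_tight {u v : Fin d} (huv : u ≠ v) (hadj : ¬ G.Adj u v) {x y z : Fin d → ℝ}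
    (hy : y ∈ edgePolytope G) (hz : z ∈ edgePolytope G) (hx : x ∈ openSegment ℝ y z)
    (hxuv : x u + x v = 1) : y u + y v = 1 := by
  let π : Fin d → (Fin d → ℝ) →ₗ[ℝ] ℝ := LinearMap.proj
  refine eq_of_mem_openSegment_of_tight (G := G) (π u + π v) ?_ hy hz hx hxuv
  intro p q hpq
  have := hpq.ne
  simp only [LinearMap.add_apply, LinearMap.proj_apply, π, rho_mk_apply]
  by_cases h1 : u = p <;> by_cases h2 : u = q <;> by_cases h3 : v = p <;> by_cases h4 : v = q <;>
    subst_vars <;> simp_all [G.adj_comm]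

theorem apply_eq_zero_of_mem_openSegment {u : Fin d} {x y z : Fin d → ℝ}
    (hy : y ∈ edgePolytope G) (hz : z ∈ edgePolytope G) (hx : x ∈ openSegment ℝ y z)
    (hxu : x u = 0) : y u = 0 := by
  have := eq_of_mem_openSegment_of_tight (G := G) (-LinearMap.proj u) (c := 0) ?_ hy hz hx
    (by simpa using hxu)
  · simpa using this
  · intro p q _
    simp only [LinearMap.neg_apply, LinearMap.proj_apply, rho_mk_apply]
    split_ifs <;> norm_num

theorem false_of_midpoint_rigid {a : Fin d → ℝ}
    (hI : IsIntegralSet (edgePolytope G ∩ {x | 0 ≤ ∑ i, a i * x i})) {i j k l : Fin d}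
    (hi : a i = 1) (hj : a j = 0) (hk : a k = -1) (hl : a l = 0) (hij : G.Adj i j)
    (hkl : G.Adj k l)
    (hrigid : ∀ x y z, x = (1 / 2 : ℝ) • (rho s(i, j) + rho s(k, l)) → y ∈ edgePolytope G →
      z ∈ edgePolytope G → x ∈ openSegment ℝ y z → y i = y k →
      y i = x i ∧ y j = x j ∧ y k = x k ∧ y l = x l) : False := by
  have hik : i ≠ k := by rintro rfl; linarith
  have hil : i ≠ l := by rintro rfl; linarith
  set x := (1 / 2 : ℝ) • (rho s(i, j) + rho s(k, l)) with hx
  have hφx : weightFunctional a x = 0 := by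
    simp only [hx, map_smul, map_add, weightFunctional_rho, hi, hj, hk, hl]
    norm_num
  have hxP : x ∈ edgePolytope G := by
    have := convex_convexHull ℝ (rho '' G.edgeSet) (rho_mem_edgePolytope hij)
      (rho_mem_edgePolytope hkl) (a := 1 / 2) (b := 1 / 2) (by norm_num) (by norm_num)
      (by norm_num)
    rwa [← smul_add] at this
  have hext : x ∈ (edgePolytope G ∩ {x | 0 ≤ ∑ i, a i * x i}).extremePoints ℝ := by
    rw [mem_extremePoints_iff_left]
    refine ⟨⟨hxP, by simp [← weightFunctional_apply, hφx]⟩, ?_⟩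
    rintro y ⟨hy, hφy⟩ z ⟨hz, hφz⟩ hseg
    have hsupp (v : Fin d) (hvi : v ≠ i) (hvj : v ≠ j) (hvk : v ≠ k) (hvl : v ≠ l) :
        x v = 0 ∧ y v = 0 := by
      have hxv : x v = 0 := by simp [hx, rho_mk_apply, hvi, hvj, hvk, hvl]
      exact ⟨hxv, apply_eq_zero_of_mem_openSegment hy hz hseg hxv⟩
    have hbal : y i = y k := by
      have hφy0 : weightFunctional a y = 0 := by
        obtain ⟨α, β, hα, hβ, hαβ, hxyz⟩ := hseg
        rw [← hxyz] at hφx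
        simp only [map_add, map_smul, smul_eq_mul] at hφx
        simp only [Set.mem_ofPred_eq, ← weightFunctional_apply] at hφy hφz
        have h1 := mul_nonneg hα.le hφy
        have h2 := mul_nonneg hβ.le hφz
        exact (mul_eq_zero.1 (by linarith : α * weightFunctional a y = 0)).resolve_left hα.ne'
      have hterm (v : Fin d) : a v * y v = (if v = i then y i else 0) - if v = k then y k else 0 := by
        by_cases hvi : v = i
        · simp [hvi, hi, hik]
        by_cases hvk : v = k
        · subst hvk
          simp [hk, hvi]
        by_cases hvj : v = j
        · simp [hvi, hvk, hvj ▸ hj]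
        by_cases hvl : v = l
        · simp [hvi, hvk, hvl ▸ hl]
        simp [hvi, hvk, (hsupp v hvi hvj hvk hvl).2]
      simp only [weightFunctional_apply, hterm, Finset.sum_sub_distrib, Finset.sum_ite_eq',
        Finset.mem_univ, if_true] at hφy0
      linarith
    obtain ⟨h1, h2, h3, h4⟩ := hrigid x y z hx hy hz hseg hbal
    ext v
    by_cases hvi : v = i
    · rwa [hvi]
    by_cases hvk : v = k
    · rwa [hvk]
    by_cases hvj : v = j
    · rwa [hvj]
    by_cases hvl : v = l
    · rwa [hvl]
    rw [(hsupp v hvi hvj hvk hvl).1, (hsupp v hvi hvj hvk hvl).2]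
  obtain ⟨n, hn⟩ := hI x hext i
  have hxi : x i = 1 / 2 := by simp [hx, rho_mk_apply, hij.ne, hik, hil]
  rw [hxi] at hn
  have h2 : ((2 * n : ℤ) : ℝ) = (1 : ℤ) := by
    push_cast
    linarith
  have := Int.cast_injective h2
  omega

/-- An edge on which the weight is `1` and an edge on which it is `-1` do not share an endpoint. -/
theorem ne_of_isIntegralSet {a : Fin d → ℝ}
    (hI : IsIntegralSet (edgePolytope G ∩ {x | 0 ≤ ∑ i, a i * x i})) {i j k l : Fin d}
    (hi : a i = 1) (hj : a j = 0) (hk : a k = -1) (hl : a l = 0) (hij : G.Adj i j)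
    (hkl : G.Adj k l) : j ≠ l := by
  rintro rfl
  have hik : i ≠ k := by rintro rfl; linarith
  have hijne := hij.ne
  have hkjne := hkl.ne
  refine false_of_midpoint_rigid hI hi hj hk hj hij hkl ?_
  rintro x y z hx hy hz hseg hbal
  have hxi : x i = 1 / 2 := by simp [hx, rho_mk_apply, hijne, hik]
  have hxk : x k = 1 / 2 := by simp [hx, rho_mk_apply, hkjne, hik.symm]
  have hxj : x j = 1 := by simp [hx, rho_mk_apply, hijne.symm, hkjne.symm]; norm_num
  have hyj : y j = 1 := by
    refine eq_of_mem_openSegment_of_tight (G := G) (c := 1) (LinearMap.proj j) ?_ hy hz hseg hxj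
    intro p q hpq
    have := hpq.ne
    simp only [LinearMap.proj_apply, rho_mk_apply]
    split_ifs <;> first | (norm_num; done) | (subst_vars; contradiction)
  have hysum : y i + y j + y k = 2 := by
    let π : Fin d → (Fin d → ℝ) →ₗ[ℝ] ℝ := LinearMap.proj
    refine eq_of_mem_openSegment_of_tight (G := G) (π i + π j + π k) ?_ hy hz hseg ?_
    swap
    · simp only [LinearMap.add_apply, LinearMap.proj_apply, π, hxi, hxj, hxk]
      norm_num
    intro p q _
    simp only [LinearMap.add_apply, LinearMap.proj_apply, π, rho_mk_apply]
    have (r : Fin d) : ((if i = r then 1 else 0) + (if j = r then 1 else 0) +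
        (if k = r then 1 else 0) : ℝ) ≤ 1 := by
      split_ifs <;> first | (norm_num; done) | (subst_vars; contradiction)
    linarith [this p, this q]
  refine ⟨?_, ?_, ?_, ?_⟩ <;> linarith

/-- An edge on which the weight is `1` and an edge on which it is `-1` span a 4-cycle. -/
theorem adj_and_adj_of_isIntegralSet {a : Fin d → ℝ}
    (hI : IsIntegralSet (edgePolytope G ∩ {x | 0 ≤ ∑ i, a i * x i})) {i j k l : Fin d}
    (hi : a i = 1) (hj : a j = 0) (hk : a k = -1) (hl : a l = 0) (hij : G.Adj i j)
    (hkl : G.Adj k l) : G.Adj i k ∧ G.Adj j l := by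
  have hik : i ≠ k := by rintro rfl; linarith
  have hil : i ≠ l := by rintro rfl; linarith
  have hjk : j ≠ k := by rintro rfl; linarith
  have hjl := ne_of_isIntegralSet hI hi hj hk hl hij hkl
  have hnil : ¬ G.Adj i l := fun h => ne_of_isIntegralSet hI hi hl hk hl h hkl rfl
  have hnjk : ¬ G.Adj j k := fun h => ne_of_isIntegralSet hI hi hj hk hj hij h.symm rfl
  by_contra hnot
  refine false_of_midpoint_rigid hI hi hj hk hl hij hkl ?_
  rintro x y z hx hy hz hseg hbal
  have hxi : x i = 1 / 2 := by simp [hx, rho_mk_apply, hij.ne, hik, hil]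
  have hxj : x j = 1 / 2 := by simp [hx, rho_mk_apply, hij.ne.symm, hjk, hjl]
  have hxk : x k = 1 / 2 := by simp [hx, rho_mk_apply, hkl.ne, hik.symm, hjk.symm]
  have hxl : x l = 1 / 2 := by simp [hx, rho_mk_apply, hkl.ne.symm, hil.symm, hjl.symm]
  have h1 := add_eq_one_of_tight hil hnil hy hz hseg (by rw [hxi, hxl]; norm_num)
  have h2 := add_eq_one_of_tight hjk hnjk hy hz hseg (by rw [hxj, hxk]; norm_num)
  rcases not_and_or.1 hnot with h | h
  · have h3 := add_eq_one_of_tight hik h hy hz hseg (by rw [hxi, hxk]; norm_num)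
    refine ⟨?_, ?_, ?_, ?_⟩ <;> linarith
  · have h3 := add_eq_one_of_tight hjl h hy hz hseg (by rw [hxj, hxl]; norm_num)
    refine ⟨?_, ?_, ?_, ?_⟩ <;> linarith

/-- A hyperplane meeting the relative interior of the edge polytope, with an edge strictly on one
side, has an edge strictly on the other side. -/
theorem exists_adj_pos_of_exists_adj_neg {a : Fin d → ℝ}
    (hint : ∃ x ∈ intrinsicInterior ℝ (edgePolytope G), weightFunctional a x = 0)
    (hneg : ∃ u v, G.Adj u v ∧ a u + a v < 0) : ∃ u v, G.Adj u v ∧ 0 < a u + a v := by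
  obtain ⟨x, hx, hφx⟩ := hint
  obtain ⟨u, v, huv, hlt⟩ := hneg
  by_contra! hcon
  obtain ⟨t, ht, hmem⟩ := exists_lineMap_mem_of_mem_intrinsicInterior hx (rho_mem_edgePolytope huv)
  have hle := le_of_mem_edgePolytope (weightFunctional a) (c := 0)
    (fun p q hpq => by rw [weightFunctional_rho]; exact hcon p q hpq) hmem
  simp only [AffineMap.lineMap_apply_module', map_add, map_smul, map_sub, smul_eq_mul, hφx,
    weightFunctional_rho] at hle
  nlinarith

theorem weightFunctional_neg (a x : Fin d → ℝ) :
    weightFunctional (-a) x = -weightFunctional a x := by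
  simp [weightFunctional_apply]

theorem exists_adj_pos_and_neg (hG : G.Connected) {a : Fin d → ℝ} (ha : a ≠ 0)
    (hzero : ∃ i, a i = 0)
    (hint : ∃ x ∈ intrinsicInterior ℝ (edgePolytope G), weightFunctional a x = 0) :
    (∃ u v, G.Adj u v ∧ 0 < a u + a v) ∧ ∃ u v, G.Adj u v ∧ a u + a v < 0 := by
  have hneg_of_pos (h : ∃ u v, G.Adj u v ∧ 0 < a u + a v) :
      ∃ u v, G.Adj u v ∧ a u + a v < 0 := by
    obtain ⟨u, v, huv, hlt⟩ := h
    obtain ⟨x, hx, hφx⟩ := hint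
    obtain ⟨p, q, hpq, h⟩ := exists_adj_pos_of_exists_adj_neg (G := G) (a := -a)
      ⟨x, hx, by rw [weightFunctional_neg, hφx, neg_zero]⟩
      ⟨u, v, huv, by simp only [Pi.neg_apply]; linarith⟩
    exact ⟨p, q, hpq, by simp only [Pi.neg_apply] at h; linarith⟩
  have hpos_of_neg := exists_adj_pos_of_exists_adj_neg hint
  by_cases hpos : ∃ u v, G.Adj u v ∧ 0 < a u + a v
  · exact ⟨hpos, hneg_of_pos hpos⟩
  by_cases hneg : ∃ u v, G.Adj u v ∧ a u + a v < 0
  · exact ⟨hpos_of_neg hneg, hneg⟩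
  push Not at hpos hneg
  obtain ⟨i, hi⟩ := hzero
  refine absurd (funext fun v => ?_) ha
  obtain ⟨p⟩ := hG.preconnected v i
  induction p with
  | nil => exact hi
  | cons h _ ih =>
    have := ih hi
    simp only [Pi.zero_apply] at this ⊢
    linarith [hpos _ _ h, hneg _ _ h]

/-- Sufficient conditions on edges for the half-space slice of the edge polytope to be integral. -/
theorem isIntegralSet_inter_nonneg {a : Fin d → ℝ}
    (hval : ∀ u v, G.Adj u v → a u + a v = 1 ∨ a u + a v = -1 ∨ a u + a v = 0)
    (hpos : ∃ u v, G.Adj u v ∧ a u + a v = 1) (hneg : ∃ u v, G.Adj u v ∧ a u + a v = -1)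
    (hswap : ∀ e ∈ G.edgeSet, ∀ f ∈ G.edgeSet, weightFunctional a (rho e) = 1 →
      weightFunctional a (rho f) = -1 → ∃ e' ∈ G.edgeSet, ∃ f' ∈ G.edgeSet,
        weightFunctional a (rho e') = 0 ∧ weightFunctional a (rho f') = 0 ∧
          rho e + rho f = rho e' + rho f') :
    IsIntegralSet (edgePolytope G ∩ {x | 0 ≤ ∑ i, a i * x i}) := by
  let S : ℝ → Set (Fin d → ℝ) := fun c => rho '' {e ∈ G.edgeSet | weightFunctional a (rho e) = c}
  have hS (c : ℝ) : ∀ x ∈ S c, weightFunctional a x = c := by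
    rintro _ ⟨e, he, rfl⟩
    exact he.2
  have hunion : rho '' G.edgeSet = S 1 ∪ S (-1) ∪ S 0 := by
    simp only [S, ← Set.image_union]
    congr 1
    ext e
    induction e with
    | _ u v =>
      have := hval u v
      simp only [SimpleGraph.mem_edgeSet, Set.mem_union, Set.mem_ofPred_eq, weightFunctional_rho]
      tauto
  have hposS : (S 1).Nonempty := by
    obtain ⟨u, v, huv, h⟩ := hpos
    exact ⟨_, s(u, v), ⟨huv, by rw [weightFunctional_rho, h]⟩, rfl⟩
  have hnegS : (S (-1)).Nonempty := by
    obtain ⟨u, v, huv, h⟩ := hneg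
    exact ⟨_, s(u, v), ⟨huv, by rw [weightFunctional_rho, h]⟩, rfl⟩
  have hmid : ∀ p ∈ S 1, ∀ n ∈ S (-1), (1 / 2 : ℝ) • (p + n) ∈ convexHull ℝ (S 0) := by
    rintro _ ⟨e, he, rfl⟩ _ ⟨f, hf, rfl⟩
    obtain ⟨e', he', f', hf', he0, hf0, heq⟩ := hswap e he.1 f hf.1 he.2 hf.2
    rw [heq, smul_add]
    exact convex_convexHull ℝ (S 0) (subset_convexHull ℝ _ ⟨e', ⟨he', he0⟩, rfl⟩)
      (subset_convexHull ℝ _ ⟨f', ⟨hf', hf0⟩, rfl⟩) (by norm_num) (by norm_num) (by norm_num)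
  have hzeroS : (S 0).Nonempty :=
    convexHull_nonempty_iff.1 ⟨_, hmid _ hposS.some_mem _ hnegS.some_mem⟩
  have hslice := convexHull_inter_nonneg_eq hposS hnegS hzeroS (weightFunctional a) (hS 1) (hS (-1))
    (hS 0) hmid
  simp only [weightFunctional_apply] at hslice
  intro x hx i
  rw [edgePolytope, hunion, hslice] at hx
  rcases extremePoints_convexHull_subset hx with ⟨e, -, rfl⟩ | ⟨e, -, rfl⟩ <;>
    exact rho_apply_integer e i

theorem isSepHyperplane_of_swap {a : Fin d → ℝ}
    (hval : ∀ u v, G.Adj u v → a u + a v = 1 ∨ a u + a v = -1 ∨ a u + a v = 0)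
    (hpos : ∃ u v, G.Adj u v ∧ a u + a v = 1) (hneg : ∃ u v, G.Adj u v ∧ a u + a v = -1)
    (hswap : ∀ e ∈ G.edgeSet, ∀ f ∈ G.edgeSet, weightFunctional a (rho e) = 1 →
      weightFunctional a (rho f) = -1 → ∃ e' ∈ G.edgeSet, ∃ f' ∈ G.edgeSet,
        weightFunctional a (rho e') = 0 ∧ weightFunctional a (rho f') = 0 ∧
          rho e + rho f = rho e' + rho f') :
    IsSepHyperplane G a 0 := by
  refine ⟨?_, ?_, isIntegralSet_inter_nonneg hval hpos hneg hswap, ?_⟩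
  · rintro rfl
    obtain ⟨u, v, -, h⟩ := hpos
    simp at h
  · obtain ⟨u, v, huv, h⟩ := hpos
    obtain ⟨p, q, hpq, h'⟩ := hneg
    simp only [← weightFunctional_apply]
    exact (convex_convexHull ℝ _).exists_mem_intrinsicInterior_eq_zero (weightFunctional a)
      (rho_mem_edgePolytope huv) (rho_mem_edgePolytope hpq)
      (by rw [weightFunctional_rho, h]; norm_num) (by rw [weightFunctional_rho, h']; norm_num)
  · have := isIntegralSet_inter_nonneg (G := G) (a := -a) ?_ ?_ ?_ ?_
    · simpa using this
    · intro u v huv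
      simp only [Pi.neg_apply]
      rcases hval u v huv with h | h | h
      · right; left; linarith
      · left; linarith
      · right; right; linarith
    · obtain ⟨u, v, huv, h⟩ := hneg
      exact ⟨u, v, huv, by simp only [Pi.neg_apply]; linarith⟩
    · obtain ⟨u, v, huv, h⟩ := hpos
      exact ⟨u, v, huv, by simp only [Pi.neg_apply]; linarith⟩
    · simp only [weightFunctional_neg, neg_eq_zero, neg_inj]
      intro e he f hf h1 h2
      obtain ⟨e', he', f', hf', he0, hf0, heq⟩ := hswap f hf e he h2 (by linarith)
      exact ⟨e', he', f', hf', he0, hf0, by rw [add_comm, heq]⟩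

end EdgePolytope

/-- In a cycle-compatible pair of edges `{i,j}`, `{k,l}` without the chords `{i,l}`, `{j,k}`, the
4-cycle is `i j l k`. -/
theorem CycleCompatible.adj_and_adj {V : Type*} {G : SimpleGraph V} {i j k l : V}
    (h : CycleCompatible G s(i, j) s(k, l)) (hil : ¬ G.Adj i l) (hjk : ¬ G.Adj j k) :
    G.Adj i k ∧ G.Adj j l := by
  obtain ⟨i', j', k', l', hij', hkl', p, q, r, s, hsub, hpq, hpr, hps, hqr, hqs, hrs, h1, h2, h3,
    h4⟩ := h
  have hmem (v : V) (hv : v ∈ ({p, q, r, s} : Set V)) : v = i ∨ v = j ∨ v = k ∨ v = l := by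
    have := hsub hv
    simp only [Set.mem_insert_iff, Set.mem_singleton_iff] at this
    have := Sym2.eq_iff.1 hij'
    have := Sym2.eq_iff.1 hkl'
    grind
  have hp := hmem p (by simp)
  have hq := hmem q (by simp)
  have hr := hmem r (by simp)
  have hs := hmem s (by simp)
  have hli : ¬ G.Adj l i := fun h => hil h.symm
  have hkj : ¬ G.Adj k j := fun h => hjk h.symm
  rcases hp with rfl | rfl | rfl | rfl <;> rcases hq with rfl | rfl | rfl | rfl <;>
    first
    | contradiction
    | (rcases hr with rfl | rfl | rfl | rfl <;>
        first
        | contradiction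
        | (rcases hs with rfl | rfl | rfl | rfl <;>
            first
            | contradiction
            | exact ⟨by first | assumption | (apply SimpleGraph.Adj.symm; assumption),
                by first | assumption | (apply SimpleGraph.Adj.symm; assumption)⟩))

set_option maxHeartbeats 800000 in
/-- For a finite connected simple graph `G` on `[d]`, the edge polytope
`𝒫_G` is type II decomposable iff there is a partition `[d] = V₁ ⊔ V₂ ⊔ V₃ ⊔ V₄ ⊔ V₅` such
that: (1) `G[V₁ ∪ V₂]` is bipartite with bipartition `V₁, V₂`; (2) `E_{1,4}` and `E_{2,3}`
are nonempty and every pair `e ∈ E_{1,4}`, `f ∈ E_{2,3}` is cycle-compatible;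
(3) `E_{1,3} = E_{1,5} = E_{2,4} = E_{2,5} = ∅`. -/
theorem typeII_iff_partition {d : ℕ} (G : SimpleGraph (Fin d)) (hG : G.Connected) :
    TypeIIDecomposable G ↔
      ∃ V₁ V₂ V₃ V₄ V₅ : Set (Fin d),
        (∀ v, v ∈ V₁ ∨ v ∈ V₂ ∨ v ∈ V₃ ∨ v ∈ V₄ ∨ v ∈ V₅) ∧
        (Disjoint V₁ V₂ ∧ Disjoint V₁ V₃ ∧ Disjoint V₁ V₄ ∧ Disjoint V₁ V₅ ∧
          Disjoint V₂ V₃ ∧ Disjoint V₂ V₄ ∧ Disjoint V₂ V₅ ∧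
          Disjoint V₃ V₄ ∧ Disjoint V₃ V₅ ∧ Disjoint V₄ V₅) ∧
        (∀ i j, G.Adj i j → i ∈ V₁ ∪ V₂ → j ∈ V₁ ∪ V₂ →
          ((i ∈ V₁ ∧ j ∈ V₂) ∨ (i ∈ V₂ ∧ j ∈ V₁))) ∧
        (∃ i j, i ∈ V₁ ∧ j ∈ V₄ ∧ G.Adj i j) ∧
        (∃ k l, k ∈ V₂ ∧ l ∈ V₃ ∧ G.Adj k l) ∧
        (∀ i j k l, i ∈ V₁ → j ∈ V₄ → k ∈ V₂ → l ∈ V₃ → G.Adj i j → G.Adj k l →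
          CycleCompatible G s(i, j) s(k, l)) ∧
        (∀ i j, G.Adj i j → ¬(i ∈ V₁ ∧ j ∈ V₃) ∧ ¬(i ∈ V₁ ∧ j ∈ V₅) ∧
          ¬(i ∈ V₂ ∧ j ∈ V₄) ∧ ¬(i ∈ V₂ ∧ j ∈ V₅)) := by
  constructor
  · rintro ⟨a, hval, hzero, hedge, ha, hint, hI, -⟩
    simp only [← weightFunctional_apply] at hint
    obtain ⟨⟨p, q, hpq, hpos⟩, ⟨r, s, hrs, hneg⟩⟩ := exists_adj_pos_and_neg hG ha hzero hint
    refine ⟨{v | a v = 1}, {v | a v = -1}, {v | a v = 0 ∧ ∃ u, a u = -1 ∧ G.Adj u v},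
      {v | a v = 0 ∧ ∃ u, a u = 1 ∧ G.Adj u v},
      {v | a v = 0 ∧ ∀ u, G.Adj u v → a u = 0}, ?_, ?_, ?_, ?_, ?_, ?_, ?_⟩
    · intro v
      simp only [Set.mem_ofPred_eq]
      by_cases h : ∀ u, G.Adj u v → a u = 0
      · have := hval v
        tauto
      · push Not at h
        obtain ⟨u, huv, hu⟩ := h
        have := hval v
        have := hval u
        grind
    · simp only [Set.disjoint_left, Set.mem_ofPred_eq]
      have hne : ∀ v, a v = 0 → (∃ u, a u = -1 ∧ G.Adj u v) → ¬ ∃ u, a u = 1 ∧ G.Adj u v := by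
        rintro v hv ⟨k, hk, hkv⟩ ⟨i, hi, hiv⟩
        exact ne_of_isIntegralSet hI hi hv hk hv hiv hkv rfl
      refine ⟨?_, ?_, ?_, ?_, ?_, ?_, ?_, ?_, ?_, ?_⟩ <;> grind
    · simp only [Set.mem_union, Set.mem_ofPred_eq]
      intro i j hij
      have := hedge i j hij
      tauto
    · simp only [Set.mem_ofPred_eq]
      have h1 := hedge p q hpq
      have hp := hval p
      have hq := hval q
      have := hpq.symm
      rcases hp with hp | hp | hp
      · exact ⟨q, p, by grind, ⟨hp, q, by grind, this⟩, this⟩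
      · exact ⟨p, q, hp, ⟨by grind, p, hp, hpq⟩, hpq⟩
      · grind
    · simp only [Set.mem_ofPred_eq]
      have h1 := hedge r s hrs
      have hr := hval r
      have hs := hval s
      have := hrs.symm
      rcases hr with hr | hr | hr
      · exact ⟨s, r, by grind, ⟨hr, s, by grind, this⟩, this⟩
      · grind
      · exact ⟨r, s, hr, ⟨by grind, r, hr, hrs⟩, hrs⟩
    · rintro i j k l hi ⟨hj, -⟩ hk ⟨hl, -⟩ hij hkl
      obtain ⟨hik, hjl⟩ := adj_and_adj_of_isIntegralSet hI hi hj hk hl hij hkl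
      simp only [Set.mem_ofPred_eq] at hi hk
      refine ⟨i, j, k, l, rfl, rfl, i, j, l, k, by grind, hij.ne, ?_, hik.ne, hjl.ne, ?_,
        hkl.ne.symm, hij, hjl, hkl.symm, hik.symm⟩
      · rintro rfl; linarith
      · rintro rfl; linarith
    · simp only [Set.mem_ofPred_eq]
      intro i j hij
      refine ⟨?_, ?_, ?_, ?_⟩
      · rintro ⟨hi, hj, k, hk, hkj⟩
        exact ne_of_isIntegralSet hI hi hj hk hj hij hkj rfl
      · rintro ⟨hi, -, h⟩
        linarith [h i hij]
      · rintro ⟨hk, hj, i', hi, hij'⟩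
        exact ne_of_isIntegralSet hI hi hj hk hj hij' hij rfl
      · rintro ⟨hi, -, h⟩
        linarith [h i hij]
  · rintro ⟨V₁, V₂, V₃, V₄, V₅, hcover, ⟨h12, h13, h14, h15, h23, h24, h25, h34, h35, h45⟩, hbip,
      ⟨i₀, j₀, hi₀, hj₀, hij₀⟩, ⟨k₀, l₀, hk₀, hl₀, hkl₀⟩, hcyc, hempty⟩
    simp only [Set.disjoint_left] at h12 h13 h14 h15 h23 h24 h25 h34 h35 h45
    classical
    let a : Fin d → ℝ := fun v => if v ∈ V₁ then 1 else if v ∈ V₂ then -1 else 0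
    have ha1 (v : Fin d) (hv : v ∈ V₁) : a v = 1 := if_pos hv
    have ha2 (v : Fin d) (hv : v ∈ V₂) : a v = -1 := by
      simp only [a, if_pos hv, if_neg fun h => h12 h hv]
    have ha0 (v : Fin d) (hv1 : v ∉ V₁) (hv2 : v ∉ V₂) : a v = 0 := by
      simp only [a, if_neg hv1, if_neg hv2]
    have hclass (u v : Fin d) (huv : G.Adj u v) :
        (u ∈ V₁ ∧ v ∈ V₄ ∧ a u = 1 ∧ a v = 0) ∨ (v ∈ V₁ ∧ u ∈ V₄ ∧ a v = 1 ∧ a u = 0) ∨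
        (u ∈ V₂ ∧ v ∈ V₃ ∧ a u = -1 ∧ a v = 0) ∨ (v ∈ V₂ ∧ u ∈ V₃ ∧ a v = -1 ∧ a u = 0) ∨
        (a u = 1 ∧ a v = -1) ∨ (a u = -1 ∧ a v = 1) ∨ (a u = 0 ∧ a v = 0) := by
      have := hempty u v huv
      have := hempty v u huv.symm
      have := hbip u v huv
      simp only [Set.mem_union] at this
      have := hcover u
      have := hcover v
      have := ha0 u
      have := ha0 v
      have := ha1 u
      have := ha1 v
      have := ha2 u
      have := ha2 v
      by_cases u ∈ V₁ <;> by_cases u ∈ V₂ <;> by_cases v ∈ V₁ <;> by_cases v ∈ V₂ <;> grind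
    have hV3 (v : Fin d) (hv : v ∈ V₃) : a v = 0 := ha0 v (fun h => h13 h hv) fun h => h23 h hv
    have hV4 (v : Fin d) (hv : v ∈ V₄) : a v = 0 := ha0 v (fun h => h14 h hv) fun h => h24 h hv
    refine ⟨a, ?_, ⟨j₀, hV4 j₀ hj₀⟩, ?_, isSepHyperplane_of_swap ?_
      ⟨i₀, j₀, hij₀, by rw [ha1 _ hi₀, hV4 _ hj₀, add_zero]⟩
      ⟨k₀, l₀, hkl₀, by rw [ha2 _ hk₀, hV3 _ hl₀, add_zero]⟩ ?_⟩
    · intro v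
      simp only [a]
      split_ifs <;> simp
    · intro u v huv
      rcases hclass u v huv with ⟨-, -, h, h'⟩ | ⟨-, -, h, h'⟩ | ⟨-, -, h, h'⟩ | ⟨-, -, h, h'⟩ |
        ⟨h, h'⟩ | ⟨h, h'⟩ | ⟨h, h'⟩ <;> rw [h, h'] <;> norm_num
    · intro u v huv
      rcases hclass u v huv with ⟨-, -, h, h'⟩ | ⟨-, -, h, h'⟩ | ⟨-, -, h, h'⟩ | ⟨-, -, h, h'⟩ |
        ⟨h, h'⟩ | ⟨h, h'⟩ | ⟨h, h'⟩ <;> rw [h, h'] <;> norm_num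
    · have hposE (e : Sym2 (Fin d)) (he : e ∈ G.edgeSet) (h : weightFunctional a (rho e) = 1) :
          ∃ i j, e = s(i, j) ∧ i ∈ V₁ ∧ j ∈ V₄ ∧ G.Adj i j := by
        induction e with
        | _ u v =>
          rw [weightFunctional_rho] at h
          have huv : G.Adj u v := he
          rcases hclass u v huv with h' | h' | h'
          · exact ⟨u, v, rfl, h'.1, h'.2.1, huv⟩
          · exact ⟨v, u, Sym2.eq_swap, h'.1, h'.2.1, huv.symm⟩
          · grind
      have hnegE (e : Sym2 (Fin d)) (he : e ∈ G.edgeSet) (h : weightFunctional a (rho e) = -1) :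
          ∃ k l, e = s(k, l) ∧ k ∈ V₂ ∧ l ∈ V₃ ∧ G.Adj k l := by
        induction e with
        | _ u v =>
          rw [weightFunctional_rho] at h
          have huv : G.Adj u v := he
          rcases hclass u v huv with h' | h' | h' | h' | h'
          · grind
          · grind
          · exact ⟨u, v, rfl, h'.1, h'.2.1, huv⟩
          · exact ⟨v, u, Sym2.eq_swap, h'.1, h'.2.1, huv.symm⟩
          · grind
      intro e he f hf h1 h2
      obtain ⟨i, j, rfl, hi, hj, hij⟩ := hposE e he h1
      obtain ⟨k, l, rfl, hk, hl, hkl⟩ := hnegE f hf h2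
      obtain ⟨hik, hjl⟩ := (hcyc i j k l hi hj hk hl hij hkl).adj_and_adj
        (fun h => (hempty i l h).1 ⟨hi, hl⟩) (fun h => (hempty k j h.symm).2.2.1 ⟨hk, hj⟩)
      refine ⟨s(i, k), hik, s(j, l), hjl, ?_, ?_, ?_⟩
      · rw [weightFunctional_rho, ha1 i hi, ha2 k hk]
        norm_num
      · rw [weightFunctional_rho, hV4 j hj, hV3 l hl, add_zero]
      · ext v
        simp only [Pi.add_apply, rho_mk_apply]
        ring
end
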